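/- Let p ≥ 1 and n be natural numbers with n > p·(p+3)/2 + 1, set φ = (4·n − 4)/((n − p·(p+3)/2)² − 1), and let ℓ₁ ≥ ℓ₂ > 0 be real numbers with relative eigengap δ = (ℓ₁ − ℓ₂)/ℓ₁. Then φ + Real.log ℓ₁ + Real.log ℓ₂ − 2·Real.log((ℓ₁ + ℓ₂)/2) > 0 if and only if δ < 2·(1 − Real.exp(φ) + Real.exp(φ/2)·Real.sqrt(Real.exp(φ) − 1)). -/

import Mathlib

theorem aicc_releigengap_threshold (p n : ℕ) (hp : 1 ≤ p)
    (hn : (p : ℝ) * (p + 3) / 2 + 1 < (n : ℝ))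
    (φ : ℝ) (hφ : φ = (4 * (n : ℝ) - 4) / (((n : ℝ) - (p : ℝ) * (p + 3) / 2) ^ 2 - 1))
    (ℓ₁ ℓ₂ : ℝ) (h12 : ℓ₂ ≤ ℓ₁) (h2pos : 0 < ℓ₂)
    (δ : ℝ) (hδ : δ = (ℓ₁ - ℓ₂) / ℓ₁) :
    0 < φ + Real.log ℓ₁ + Real.log ℓ₂ - 2 * Real.log ((ℓ₁ + ℓ₂) / 2) ↔
      δ < 2 * (1 - Real.exp φ + Real.exp (φ / 2) * Real.sqrt (Real.exp φ - 1)) := by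
  have h1pos : 0 < ℓ₁ := lt_of_lt_of_le h2pos h12
  have hp' : (1 : ℝ) ≤ p := by exact_mod_cast hp
  have hφpos : 0 < φ := by
    rw [hφ]
    apply div_pos
    · nlinarith
    · nlinarith
  obtain ⟨a, ha⟩ : ∃ a, a = Real.exp (φ / 2) := ⟨_, rfl⟩
  have haa : Real.exp φ = a ^ 2 := by
    rw [ha, ← Real.exp_nat_mul]
    congr 1
    push_cast
    ring
  have ha1 : 1 < a := by
    rw [ha]
    exact Real.one_lt_exp_iff.mpr (by linarith)
  rw [← ha, haa]
  obtain ⟨s, hs⟩ : ∃ s, s = Real.sqrt (a ^ 2 - 1) := ⟨_, rfl⟩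
  have hs2 : s ^ 2 = a ^ 2 - 1 := by
    rw [hs]
    exact Real.sq_sqrt (by nlinarith)
  have hs0 : 0 ≤ s := hs ▸ Real.sqrt_nonneg _
  rw [← hs]
  have hδ0 : 0 ≤ δ := by
    rw [hδ]
    exact div_nonneg (by linarith) h1pos.le
  have hl2 : ℓ₂ = ℓ₁ * (1 - δ) := by
    rw [hδ]
    field_simp
    ring
  have hm : 0 < (ℓ₁ + ℓ₂) / 2 := by linarith
  have e1 : φ + Real.log ℓ₁ + Real.log ℓ₂ = Real.log (a ^ 2 * ℓ₁ * ℓ₂) := by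
    rw [Real.log_mul (by positivity) h2pos.ne', Real.log_mul (by positivity) h1pos.ne',
      ← haa, Real.log_exp]
  have e2 : 2 * Real.log ((ℓ₁ + ℓ₂) / 2) = Real.log (((ℓ₁ + ℓ₂) / 2) ^ 2) := by
    rw [Real.log_pow]
    norm_num
  rw [e1, e2, sub_pos, Real.log_lt_log_iff (by positivity) (by positivity)]
  have e3 : ((ℓ₁ + ℓ₂) / 2) ^ 2 < a ^ 2 * ℓ₁ * ℓ₂ ↔ (δ / 2 + s ^ 2) ^ 2 < (a * s) ^ 2 := by
    have key : a ^ 2 * ℓ₁ * ℓ₂ - ((ℓ₁ + ℓ₂) / 2) ^ 2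
        = ℓ₁ ^ 2 * ((a * s) ^ 2 - (δ / 2 + s ^ 2) ^ 2) := by
      have h : a ^ 2 = s ^ 2 + 1 := by linarith
      rw [mul_pow, hl2, h]
      ring
    rw [← sub_pos, key, mul_pos_iff_of_pos_left (by positivity), sub_pos]
  rw [e3, sq_lt_sq₀ (by positivity) (by positivity), hs2]
  constructor <;> intro h <;> linarith
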